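/- If F : U × U → ℂ (U ⊆ ℂ open) is holomorphic in each variable separately, and V ⊆ ℂ is open with ℝ ⊆ V and {e^{iθ} : θ ∈ V} ⊆ U, then the function (θ₁, θ₂) ↦ F(e^{iθ₁}, e^{iθ₂}) is holomorphic on V × V, and its restriction to ℝ² is real-analytic. -/

import Mathlib

open Complex

/-!
Hartogs' theorem makes `F` jointly holomorphic, and composing with exponentials preserves this.
A *bounded* separately holomorphic function is continuous by the Schwarz lemma, so it is the double
Cauchy integral of its values on a torus, which is analytic. In general, Baire's theorem bounds `F`
on `D × B` for a disc `D` of prescribed radius and some small disc `B`. The Taylor coefficients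
`c n z` of `F (z, ·)` at the centre of `B` are then holomorphic in `z ∈ D`, and their growth is
governed by the subharmonic functions `n⁻¹ * log⁺ (‖c n z‖ * t ^ n)`, which tend to `0` pointwise
for `t` below the radius of convergence. By Hartogs' lemma the convergence is locally uniform, so
the Taylor series of `F (z, ·)` is bounded on discs of the full radius, locally uniformly in `z`.
-/

open Filter MeasureTheory Metric Set
open scoped Real Topology ENNReal

section CauchyKernel

theorem resolvent_continuousMap_apply {X : Type*} [TopologicalSpace X] {k : C(X, ℂ)} {z : ℂ}
    (hz : z ∉ range k) (x : X) : resolvent k z x = (z - k x)⁻¹ := by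
  have hz' : IsUnit (algebraMap ℂ C(X, ℂ) z - k) := by
    rwa [← ContinuousMap.spectrum_eq_range, spectrum.notMem_iff] at hz
  exact eq_inv_of_mul_eq_one_left (DFunLike.congr_fun (Ring.inverse_mul_cancel _ hz') x)

theorem analyticAt_resolvent {A : Type*} [NormedRing A] [NormedAlgebra ℂ A] [CompleteSpace A]
    {a : A} {z : ℂ} (hz : z ∉ spectrum ℂ a) : AnalyticAt ℂ (resolvent a) z :=
  DifferentiableOn.analyticAt (s := resolventSet ℂ a)
    (fun _ hw =>
      (spectrum.hasDerivAt_resolvent_const_left hw).differentiableAt.differentiableWithinAt)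
    ((spectrum.isOpen_resolventSet a).mem_nhds (not_not.1 hz))

variable {V E : Type*} [NormedAddCommGroup V] [NormedSpace ℂ V]
  [NormedAddCommGroup E] [NormedSpace ℂ E]

theorem analyticAt_integral_smul {X Y : Type*} [TopologicalSpace X] [CompactSpace X]
    [TopologicalSpace Y] [MeasurableSpace Y] [OpensMeasurableSpace Y] {μ : Measure Y}
    {k : V → C(X, ℂ)} {v : V} (hk : AnalyticAt ℂ k v) {x : Y → X} (hx : Continuous x)
    {g : Y → E} (hg : Integrable g μ) :
    AnalyticAt ℂ (fun v => ∫ y, k v (x y) • g y ∂μ) v := by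
  have integrable_smul (φ : C(X, ℂ)) : Integrable (fun y => φ (x y) • g y) μ :=
    hg.bdd_smul _ (φ.continuous.comp hx).aestronglyMeasurable
      (.of_forall fun y => φ.norm_coe_le_norm (x y))
  let L : C(X, ℂ) →ₗ[ℂ] E :=
    { toFun φ := ∫ y, φ (x y) • g y ∂μ
      map_add' φ ψ := by
        simp only [ContinuousMap.add_apply, add_smul]
        exact integral_add (integrable_smul φ) (integrable_smul ψ)
      map_smul' c φ := by
        simp only [ContinuousMap.smul_apply, smul_assoc, RingHom.id_apply]
        exact integral_smul c _ }
  have norm_L_le (φ : C(X, ℂ)) : ‖L φ‖ ≤ (∫ y, ‖g y‖ ∂μ) * ‖φ‖ := by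
    rw [mul_comm, ← integral_const_mul]
    refine norm_integral_le_of_norm_le (hg.norm.const_mul _) (.of_forall fun y => ?_)
    rw [norm_smul]
    gcongr
    exact φ.norm_coe_le_norm (x y)
  exact ((L.mkContinuous _ norm_L_le).analyticAt _).comp hk

theorem integrableOn_deriv_circleMap_smul {a b : ℂ} {r s : ℝ} (hr : 0 ≤ r) (hs : 0 ≤ s)
    {f : ℂ × ℂ → E} (hf : ContinuousOn f (sphere a r ×ˢ sphere b s)) :
    IntegrableOn (fun θ : ℝ × ℝ => (deriv (circleMap a r) θ.1 * deriv (circleMap b s) θ.2) •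
      f (circleMap a r θ.1, circleMap b s θ.2)) (Ioc 0 (2 * π) ×ˢ Ioc 0 (2 * π)) := by
  have hf' : Continuous fun θ : ℝ × ℝ => f (circleMap a r θ.1, circleMap b s θ.2) :=
    hf.comp_continuous (by fun_prop) fun θ =>
      ⟨circleMap_mem_sphere a hr θ.1, circleMap_mem_sphere b hs θ.2⟩
  simp only [deriv_circleMap]
  have hcont : Continuous fun θ : ℝ × ℝ =>
      (circleMap 0 r θ.1 * I * (circleMap 0 s θ.2 * I)) •
        f (circleMap a r θ.1, circleMap b s θ.2) := .smul (by fun_prop) hf'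
  exact (hcont.continuousOn.integrableOn_compact (isCompact_Icc.prod isCompact_Icc)).mono_set
    (prod_mono Ioc_subset_Icc_self Ioc_subset_Icc_self)

theorem circleIntegral_circleIntegral_eq_setIntegral {a b : ℂ} {r s : ℝ} (hr : 0 ≤ r)
    (hs : 0 ≤ s) {f : ℂ × ℂ → E} (hf : ContinuousOn f (sphere a r ×ˢ sphere b s)) :
    ∮ ζ in C(a, r), ∮ η in C(b, s), f (ζ, η) =
      ∫ θ in Ioc 0 (2 * π) ×ˢ Ioc 0 (2 * π),
        (deriv (circleMap a r) θ.1 * deriv (circleMap b s) θ.2) •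
          f (circleMap a r θ.1, circleMap b s θ.2) := by
  have integrable := integrableOn_deriv_circleMap_smul hr hs hf
  rw [Measure.volume_eq_prod] at integrable ⊢
  rw [setIntegral_prod _ integrable]
  simp only [circleIntegral, intervalIntegral.integral_of_le Real.two_pi_pos.le, mul_smul,
    integral_smul]

theorem continuousOn_sub_inv_mul_sub_inv_smul {a b z w : ℂ} {r s : ℝ} {f : ℂ × ℂ → E}
    (hf : ContinuousOn f (sphere a r ×ˢ sphere b s)) (hz : z ∈ ball a r) (hw : w ∈ ball b s) :
    ContinuousOn (fun x => ((x.1 - z)⁻¹ * (x.2 - w)⁻¹) • f x) (sphere a r ×ˢ sphere b s) := by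
  refine .smul (.mul (.inv₀ (by fun_prop) ?_) (.inv₀ (by fun_prop) ?_)) hf
  · exact fun x hx => sub_ne_zero.2 (sphere_disjoint_ball.ne_of_mem hx.1 hz)
  · exact fun x hx => sub_ne_zero.2 (sphere_disjoint_ball.ne_of_mem hx.2 hw)

/-- As `(z, w)` varies, the Cauchy kernel is a product of two resolvents in the Banach algebra of
continuous functions on the torus, so it is analytic with values in that algebra. -/
theorem analyticAt_circleIntegral_circleIntegral {a b z w : ℂ} {r s : ℝ} {f : ℂ × ℂ → E}
    (hf : ContinuousOn f (sphere a r ×ˢ sphere b s)) (hz : z ∈ ball a r) (hw : w ∈ ball b s) :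
    AnalyticAt ℂ (fun p : ℂ × ℂ =>
      ∮ ζ in C(a, r), ∮ η in C(b, s), ((ζ - p.1)⁻¹ * (η - p.2)⁻¹) • f (ζ, η)) (z, w) := by
  have hr : 0 ≤ r := (pos_of_mem_ball hz).le
  have hs : 0 ≤ s := (pos_of_mem_ball hw).le
  let ζ : C(sphere a r × sphere b s, ℂ) := ⟨fun x => x.1, by fun_prop⟩
  let η : C(sphere a r × sphere b s, ℂ) := ⟨fun x => x.2, by fun_prop⟩
  have notMem_range_ζ {z} (hz : z ∈ ball a r) : z ∉ range ζ := by
    rintro ⟨x, rfl⟩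
    exact sphere_disjoint_ball.ne_of_mem x.1.2 hz rfl
  have notMem_range_η {w} (hw : w ∈ ball b s) : w ∉ range η := by
    rintro ⟨x, rfl⟩
    exact sphere_disjoint_ball.ne_of_mem x.2.2 hw rfl
  have kernel_analytic :
      AnalyticAt ℂ (fun p : ℂ × ℂ => resolvent ζ p.1 * resolvent η p.2) (z, w) :=
    .mul
      (.comp (g := resolvent ζ)
        (analyticAt_resolvent (ζ.spectrum_eq_range ▸ notMem_range_ζ hz)) analyticAt_fst)
      (.comp (g := resolvent η)
        (analyticAt_resolvent (η.spectrum_eq_range ▸ notMem_range_η hw)) analyticAt_snd)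
  let torusMap : ℝ × ℝ → sphere a r × sphere b s := fun θ =>
    (⟨circleMap a r θ.1, circleMap_mem_sphere a hr θ.1⟩,
      ⟨circleMap b s θ.2, circleMap_mem_sphere b hs θ.2⟩)
  refine (analyticAt_integral_smul kernel_analytic (x := torusMap) (by fun_prop)
    (integrableOn_deriv_circleMap_smul hr hs hf)).congr ?_
  filter_upwards [prod_mem_nhds (isOpen_ball.mem_nhds hz) (isOpen_ball.mem_nhds hw)]
    with p ⟨hp₁, hp₂⟩
  rw [circleIntegral_circleIntegral_eq_setIntegral hr hs
    (continuousOn_sub_inv_mul_sub_inv_smul hf hp₁ hp₂)]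
  congr with θ
  simp only [ContinuousMap.mul_apply, resolvent_continuousMap_apply (notMem_range_ζ hp₁),
    resolvent_continuousMap_apply (notMem_range_η hp₂), smul_smul]
  rw [← neg_sub p.1, ← neg_sub p.2, inv_neg, inv_neg, neg_mul_neg, mul_comm]
  rfl

end CauchyKernel

section Osgood

variable {E : Type*} [NormedAddCommGroup E] [NormedSpace ℂ E]

/-- `f` is holomorphic on `S` in the first variable for every value of the second variable in `T`,
and holomorphic on `T` in the second variable for every value of the first variable in `S`. -/
structure SeparatelyHolomorphicOn (f : ℂ × ℂ → E) (S T : Set ℂ) : Prop where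
  fst : ∀ w ∈ T, DifferentiableOn ℂ (fun z => f (z, w)) S
  snd : ∀ z ∈ S, DifferentiableOn ℂ (fun w => f (z, w)) T

namespace SeparatelyHolomorphicOn

variable {f : ℂ × ℂ → E} {S T S' T' : Set ℂ}

theorem mono (hf : SeparatelyHolomorphicOn f S T) (hS : S' ⊆ S) (hT : T' ⊆ T) :
    SeparatelyHolomorphicOn f S' T' where
  fst w hw := (hf.fst w (hT hw)).mono hS
  snd z hz := (hf.snd z (hS hz)).mono hT

theorem continuousOn_of_norm_le (hf : SeparatelyHolomorphicOn f S T) (hS : IsOpen S)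
    (hT : IsOpen T) {M : ℝ} (hM : ∀ z ∈ S, ∀ w ∈ T, ‖f (z, w)‖ ≤ M) :
    ContinuousOn f (S ×ˢ T) := by
  rintro ⟨a, b⟩ ⟨ha, hb⟩
  obtain ⟨r, hr, hrS⟩ := isOpen_iff.1 hS a ha
  obtain ⟨s, hs, hsT⟩ := isOpen_iff.1 hT b hb
  have schwarz {h : ℂ → E} {c : ℂ} {ρ : ℝ} (hh : DifferentiableOn ℂ h (ball c ρ))
      (hM : ∀ x ∈ ball c ρ, ‖h x‖ ≤ M) {x : ℂ} (hx : x ∈ ball c ρ) :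
      dist (h x) (h c) ≤ (M + M) / ρ * dist x c :=
    dist_le_div_mul_dist_of_mapsTo_ball hh
      (fun y hy => mem_closedBall_iff_norm.2 <|
        norm_sub_le_of_le (hM y hy) (hM c (mem_ball_self (pos_of_mem_ball hx)))) hx
  have dist_le : ∀ᶠ p in 𝓝 (a, b),
      dist (f p) (f (a, b)) ≤ (M + M) / r * dist p.1 a + (M + M) / s * dist p.2 b := by
    filter_upwards [prod_mem_nhds (ball_mem_nhds a hr) (ball_mem_nhds b hs)] with ⟨z, w⟩ ⟨hz, hw⟩
    refine (dist_triangle _ (f (a, w)) _).trans (add_le_add ?_ ?_)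
    · exact schwarz ((hf.fst w (hsT hw)).mono hrS) (fun x hx => hM x (hrS hx) w (hsT hw)) hz
    · exact schwarz ((hf.snd a ha).mono hsT) (fun x hx => hM a ha x (hsT hx)) hw
  refine ContinuousAt.continuousWithinAt (tendsto_iff_dist_tendsto_zero.2 ?_)
  refine squeeze_zero' (.of_forall fun _ => dist_nonneg) dist_le ?_
  exact Continuous.tendsto' (by fun_prop) _ _ (by simp)

variable [CompleteSpace E]

theorem circleIntegral_circleIntegral_sub_inv_smul {a b z w : ℂ} {r s : ℝ}
    (hf : SeparatelyHolomorphicOn f (closedBall a r) (closedBall b s))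
    (hz : z ∈ ball a r) (hw : w ∈ ball b s) :
    ∮ ζ in C(a, r), ∮ η in C(b, s), ((ζ - z)⁻¹ * (η - w)⁻¹) • f (ζ, η) =
      (2 * π * I) • (2 * π * I) • f (z, w) := by
  have inner {ζ : ℂ} (hζ : ζ ∈ sphere a r) :
      ∮ η in C(b, s), ((ζ - z)⁻¹ * (η - w)⁻¹) • f (ζ, η) =
        (2 * π * I) • (ζ - z)⁻¹ • f (ζ, w) := by
    simp_rw [mul_smul (ζ - z)⁻¹]
    rw [circleIntegral.integral_smul,
      (hf.snd ζ (sphere_subset_closedBall hζ)).circleIntegral_sub_inv_smul hw, smul_comm]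
  rw [circleIntegral.integral_congr (pos_of_mem_ball hz).le fun ζ hζ => inner hζ,
    circleIntegral.integral_smul,
    (hf.fst w (ball_subset_closedBall hw)).circleIntegral_sub_inv_smul hz]

theorem analyticOnNhd_of_norm_le (hf : SeparatelyHolomorphicOn f S T) (hS : IsOpen S)
    (hT : IsOpen T) {M : ℝ} (hM : ∀ z ∈ S, ∀ w ∈ T, ‖f (z, w)‖ ≤ M) :
    AnalyticOnNhd ℂ f (S ×ˢ T) := by
  rintro ⟨a, b⟩ ⟨ha, hb⟩
  obtain ⟨r, hr, hrS⟩ := nhds_basis_closedBall.mem_iff.1 (hS.mem_nhds ha)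
  obtain ⟨s, hs, hsT⟩ := nhds_basis_closedBall.mem_iff.1 (hT.mem_nhds hb)
  have cauchy_analytic := analyticAt_circleIntegral_circleIntegral
    ((hf.continuousOn_of_norm_le hS hT hM).mono
      (prod_mono (sphere_subset_closedBall.trans hrS) (sphere_subset_closedBall.trans hsT)))
    (mem_ball_self hr) (mem_ball_self hs)
  refine (cauchy_analytic.fun_const_smul (c := ((2 * π * I) * (2 * π * I))⁻¹)).congr ?_
  filter_upwards [prod_mem_nhds (ball_mem_nhds a hr) (ball_mem_nhds b hs)] with p ⟨hp₁, hp₂⟩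
  rw [(hf.mono hrS hsT).circleIntegral_circleIntegral_sub_inv_smul hp₁ hp₂,
    smul_smul (2 * π * I), inv_smul_smul₀ (mul_ne_zero two_pi_I_ne_zero two_pi_I_ne_zero)]

end SeparatelyHolomorphicOn

end Osgood

section Polar

theorem ofReal_two_pi_mul_circleAverage {u : ℂ → ℝ} {z : ℂ} {r : ℝ} (hu : CircleIntegrable u z r)
    (hu₀ : ∀ x ∈ sphere z |r|, 0 ≤ u x) :
    ENNReal.ofReal (2 * π * Real.circleAverage u z r) =
      ∫⁻ θ in Ioo (-π) π, ENNReal.ofReal (u (circleMap z r θ)) := by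
  have periodic : Function.Periodic (fun θ => u (circleMap z r θ)) (2 * π) := fun θ => by
    simp only [periodic_circleMap z r θ]
  have integrable : IntervalIntegrable (fun θ => u (circleMap z r θ)) volume (-π) π :=
    periodic.intervalIntegrable₀ Real.two_pi_pos.ne' hu _ _
  have shift := periodic.intervalIntegral_add_eq 0 (-π)
  rw [zero_add, show -π + 2 * π = π by ring] at shift
  have neg_pi_le_pi : -π ≤ π := by linarith [Real.pi_pos]
  rw [Real.circleAverage_def, smul_eq_mul, mul_inv_cancel_left₀ Real.two_pi_pos.ne', shift,
    intervalIntegral.integral_of_le neg_pi_le_pi, integral_Ioc_eq_integral_Ioo,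
    ofReal_integral_eq_lintegral_ofReal]
  · exact (intervalIntegrable_iff_integrableOn_Ioo_of_le neg_pi_le_pi).1 integrable
  · exact .of_forall fun θ => hu₀ _ (circleMap_mem_sphere' z r θ)

theorem lintegral_eq_lintegral_circleMap {φ : ℂ → ℝ≥0∞} (hφ : Measurable φ) (z : ℂ) :
    ∫⁻ x, φ x =
      ∫⁻ r in Ioi 0, ENNReal.ofReal r * ∫⁻ θ in Ioo (-π) π, φ (circleMap z r θ) := by
  have measurable_circleMap : Measurable fun p : ℝ × ℝ => circleMap z p.1 p.2 := by
    unfold circleMap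
    fun_prop
  have add_polarCoord_symm (p : ℝ × ℝ) :
      z + Complex.polarCoord.symm p = circleMap z p.1 p.2 := by
    rw [Complex.polarCoord_symm_apply, circleMap, Complex.exp_mul_I, ofReal_cos, ofReal_sin]
  rw [← lintegral_add_left_eq_self φ z, ← Complex.lintegral_comp_polarCoord_symm,
    polarCoord_target, Measure.volume_eq_prod, ← Measure.prod_restrict]
  simp only [add_polarCoord_symm, smul_eq_mul]
  rw [lintegral_prod _ (by fun_prop)]
  exact lintegral_congr fun r =>
    lintegral_const_mul (ENNReal.ofReal r)
      (hφ.comp (continuous_circleMap z r).measurable)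

theorem setLIntegral_ball_eq_lintegral_circleMap {φ : ℂ → ℝ≥0∞} (hφ : Measurable φ) (z : ℂ)
    (R : ℝ) :
    ∫⁻ x in ball z R, φ x =
      ∫⁻ r in Ioo 0 R, ENNReal.ofReal r * ∫⁻ θ in Ioo (-π) π, φ (circleMap z r θ) := by
  rw [← lintegral_indicator measurableSet_ball,
    lintegral_eq_lintegral_circleMap (hφ.indicator measurableSet_ball) z,
    show Ioo 0 R = Iio R ∩ Ioi 0 from (inter_comm _ _).trans Ioi_inter_Iio |>.symm,
    ← setLIntegral_indicator measurableSet_Iio]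
  refine setLIntegral_congr_fun measurableSet_Ioi fun r hr => ?_
  have circleMap_mem_ball (θ : ℝ) : circleMap z r θ ∈ ball z R ↔ r ∈ Iio R := by
    rw [mem_ball, dist_eq_norm, circleMap_sub_center, norm_circleMap_zero, abs_of_pos hr, mem_Iio]
  by_cases hrR : r ∈ Iio R <;> simp [indicator, circleMap_mem_ball, hrR]

end Polar

section Subharmonic

/-- A continuous subharmonic function on `D`, encoded by the sub-mean value inequality over the
circles bounding a closed disc contained in `D`. -/
structure ContinuousSubharmonicOn (u : ℂ → ℝ) (D : Set ℂ) : Prop where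
  continuousOn : ContinuousOn u D
  le_circleAverage : ∀ z r, 0 < r → closedBall z r ⊆ D → u z ≤ Real.circleAverage u z r

namespace ContinuousSubharmonicOn

variable {u : ℂ → ℝ} {D D' : Set ℂ}

theorem const_mul (hu : ContinuousSubharmonicOn u D) {c : ℝ} (hc : 0 ≤ c) :
    ContinuousSubharmonicOn (fun z => c * u z) D where
  continuousOn := hu.continuousOn.const_mul c
  le_circleAverage z r hr hz := by
    simp only [← smul_eq_mul, Real.circleAverage_fun_smul]
    exact smul_le_smul_of_nonneg_left (hu.le_circleAverage z r hr hz) hc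

theorem ofReal_mul_volume_ball_le (hu : ContinuousSubharmonicOn u D) {z : ℂ} {R : ℝ}
    (hz : ball z R ⊆ D) (hu₀ : ∀ x ∈ D, 0 ≤ u x) :
    ENNReal.ofReal (u z) * volume (ball z R) ≤ ∫⁻ x in ball z R, ENNReal.ofReal (u x) := by
  let φ : ℂ → ℝ≥0∞ := (ball z R).indicator fun x => ENNReal.ofReal (u x)
  have hφ : Measurable φ := by
    classical
    have := (ENNReal.continuous_ofReal.comp_continuousOn
      (hu.continuousOn.mono hz)).measurable_piecewise (g := 0) continuousOn_const measurableSet_ball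
    rwa [piecewise_eq_indicator] at this
  have circle_le {r : ℝ} (hr : r ∈ Ioo 0 R) :
      ∫⁻ _ in Ioo (-π) π, ENNReal.ofReal (u z) ≤ ∫⁻ θ in Ioo (-π) π, φ (circleMap z r θ) := by
    have closedBall_subset : closedBall z r ⊆ ball z R := closedBall_subset_ball hr.2
    have sphere_subset : sphere z |r| ⊆ D := by
      rw [abs_of_pos hr.1]
      exact sphere_subset_closedBall.trans (closedBall_subset.trans hz)
    have integrable : CircleIntegrable u z r :=
      ContinuousOn.circleIntegrable' (hu.continuousOn.mono sphere_subset)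
    have φ_circleMap (θ : ℝ) : φ (circleMap z r θ) = ENNReal.ofReal (u (circleMap z r θ)) :=
      indicator_of_mem (closedBall_subset (circleMap_mem_closedBall z hr.1.le θ)) _
    simp only [φ_circleMap]
    rw [← ofReal_two_pi_mul_circleAverage integrable fun x hx => hu₀ x (sphere_subset hx),
      setLIntegral_const, Real.volume_Ioo, ← ENNReal.ofReal_mul' (by linarith [Real.pi_pos]),
      sub_neg_eq_add, ← two_mul, mul_comm]
    gcongr
    exact hu.le_circleAverage z r hr.1 (closedBall_subset.trans hz)
  calc ENNReal.ofReal (u z) * volume (ball z R)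
      = ∫⁻ _ in ball z R, ENNReal.ofReal (u z) := (setLIntegral_const _ _).symm
    _ ≤ ∫⁻ x in ball z R, φ x := by
        rw [setLIntegral_ball_eq_lintegral_circleMap measurable_const,
          setLIntegral_ball_eq_lintegral_circleMap hφ]
        exact setLIntegral_mono' measurableSet_Ioo fun r hr => mul_le_mul_right (circle_le hr) _
    _ = ∫⁻ x in ball z R, ENNReal.ofReal (u x) :=
        setLIntegral_congr_fun measurableSet_ball fun x hx => indicator_of_mem hx _

theorem tendstoUniformlyOn_zero {u : ℕ → ℂ → ℝ} (hD : MeasurableSet D) (hD' : volume D ≠ ∞)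
    (hu : ∀ n, ContinuousSubharmonicOn (u n) D) (hu₀ : ∀ n, ∀ z ∈ D, 0 ≤ u n z) {C : ℝ}
    (hC : ∀ n, ∀ z ∈ D, u n z ≤ C) (hlim : ∀ z ∈ D, Tendsto (u · z) atTop (𝓝 0)) {δ : ℝ}
    (hδ : 0 < δ) : TendstoUniformlyOn u 0 atTop {z | ball z δ ⊆ D} := by
  have lintegral_tendsto :
      Tendsto (fun n => ∫⁻ z in D, ENNReal.ofReal (u n z)) atTop (𝓝 0) := by
    rw [← lintegral_zero (μ := volume.restrict D)]
    refine tendsto_lintegral_of_dominated_convergence' (fun _ => ENNReal.ofReal C)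
      (fun n => ((hu n).continuousOn.aemeasurable hD).ennreal_ofReal) (fun n => ?_) ?_ ?_
    · filter_upwards [ae_restrict_mem hD] with z hz
      exact ENNReal.ofReal_le_ofReal (hC n z hz)
    · rw [setLIntegral_const]
      exact ENNReal.mul_ne_top ENNReal.ofReal_ne_top hD'
    · filter_upwards [ae_restrict_mem hD] with z hz
      simpa using ENNReal.tendsto_ofReal (hlim z hz)
  rw [Metric.tendstoUniformlyOn_iff]
  intro ε hε
  have bound_pos : 0 < ENNReal.ofReal ε * volume (ball (0 : ℂ) δ) :=
    ENNReal.mul_pos (ENNReal.ofReal_pos.2 hε).ne' (measure_ball_pos _ _ hδ).ne'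
  filter_upwards [lintegral_tendsto.eventually_lt_const bound_pos] with n hn z hz
  have h := calc ENNReal.ofReal (u n z) * volume (ball (0 : ℂ) δ)
      = ENNReal.ofReal (u n z) * volume (ball z δ) := by simp only [Complex.volume_ball]
    _ ≤ ∫⁻ x in ball z δ, ENNReal.ofReal (u n x) :=
        (hu n).ofReal_mul_volume_ball_le hz (hu₀ n)
    _ ≤ ∫⁻ x in D, ENNReal.ofReal (u n x) := lintegral_mono_set hz
    _ < ENNReal.ofReal ε * volume (ball (0 : ℂ) δ) := hn
  rw [Pi.zero_apply, dist_zero_left, Real.norm_of_nonneg (hu₀ n z (hz (mem_ball_self hδ)))]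
  exact (ENNReal.ofReal_lt_ofReal_iff hε).1 (lt_of_mul_lt_mul_right' h)

end ContinuousSubharmonicOn

theorem log_norm_le_circleAverage_log_norm {h : ℂ → ℂ} {z : ℂ} {r : ℝ} (hr : 0 < r)
    (hh : AnalyticOnNhd ℂ h (closedBall z r)) (hz : h z ≠ 0) :
    Real.log ‖h z‖ ≤ Real.circleAverage (Real.log ‖h ·‖) z r := by
  have abs_r : |r| = r := abs_of_pos hr
  have hh' : AnalyticOnNhd ℂ h (closedBall z |r|) := by rwa [abs_r]
  have zeros_nonneg : 0 ≤ ∑ᶠ u, (MeromorphicOn.divisor h (closedBall z |r|) u : ℝ) *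
      Real.log (r * ‖z - u‖⁻¹) := by
    refine finsum_nonneg fun u => ?_
    by_cases hu : u ∈ closedBall z |r|
    · refine mul_nonneg (Int.cast_nonneg (MeromorphicOn.AnalyticOnNhd.divisor_nonneg hh' u)) ?_
      rcases (norm_nonneg (z - u)).eq_or_lt with h₀ | hpos
      · simp [← h₀]
      · rw [abs_r, mem_closedBall, dist_comm, dist_eq_norm] at hu
        exact Real.log_nonneg ((one_le_div hpos).2 hu)
    · simp [hu]
  linarith [hh'.circleAverage_log_norm hr.ne' hz]

theorem posLog_norm_le_circleAverage_posLog_norm {h : ℂ → ℂ} {z : ℂ} {r : ℝ} (hr : 0 < r)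
    (hh : AnalyticOnNhd ℂ h (closedBall z r)) :
    log⁺ ‖h z‖ ≤ Real.circleAverage (log⁺ ‖h ·‖) z r := by
  have average_nonneg : 0 ≤ Real.circleAverage (log⁺ ‖h ·‖) z r :=
    Real.circleAverage_nonneg_of_nonneg fun _ _ => Real.posLog_nonneg
  have hh' : AnalyticOnNhd ℂ h (sphere z |r|) :=
    hh.mono (by rw [abs_of_pos hr]; exact sphere_subset_closedBall)
  rcases eq_or_ne (h z) 0 with hz | hz
  · simpa only [hz, norm_zero, Real.posLog_zero] using average_nonneg
  · refine max_le average_nonneg ((log_norm_le_circleAverage_log_norm hr hh hz).trans ?_)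
    exact Real.circleAverage_mono hh'.meromorphicOn.circleIntegrable_log_norm
      (Real.continuous_posLog.comp_continuousOn hh'.continuousOn.norm).circleIntegrable'
      fun _ _ => le_max_right _ _

variable {E : Type*} [NormedAddCommGroup E] [NormedSpace ℂ E]

theorem continuousSubharmonicOn_posLog_norm {h : ℂ → E} {D : Set ℂ} (hD : IsOpen D)
    (hh : DifferentiableOn ℂ h D) : ContinuousSubharmonicOn (fun z => log⁺ ‖h z‖) D where
  continuousOn := Real.continuous_posLog.comp_continuousOn hh.continuousOn.norm
  le_circleAverage z r hr hz := by
    obtain ⟨ℓ, norm_ℓ_le, ℓ_hz⟩ := exists_dual_vector'' ℂ (h z)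
    have norm_ℓ_apply_le (x : ℂ) : ‖ℓ (h x)‖ ≤ ‖h x‖ := by
      simpa only [one_mul] using ℓ.le_of_opNorm_le norm_ℓ_le (h x)
    have ℓh_analytic : AnalyticOnNhd ℂ (fun x => ℓ (h x)) (closedBall z r) :=
      ((ℓ.differentiable.comp_differentiableOn hh).analyticOnNhd hD).mono hz
    have sphere_subset : sphere z |r| ⊆ closedBall z r := by
      rw [abs_of_pos hr]
      exact sphere_subset_closedBall
    calc log⁺ ‖h z‖ = log⁺ ‖ℓ (h z)‖ := by simp [ℓ_hz]
      _ ≤ Real.circleAverage (fun x => log⁺ ‖ℓ (h x)‖) z r :=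
        posLog_norm_le_circleAverage_posLog_norm hr ℓh_analytic
      _ ≤ Real.circleAverage (fun x => log⁺ ‖h x‖) z r :=
        Real.circleAverage_mono
          (Real.continuous_posLog.comp_continuousOn
            (ℓh_analytic.continuousOn.mono sphere_subset).norm).circleIntegrable'
          (Real.continuous_posLog.comp_continuousOn
            (hh.continuousOn.mono (sphere_subset.trans hz)).norm).circleIntegrable'
          fun x _ => Real.posLog_le_posLog (norm_nonneg _) (norm_ℓ_apply_le x)

theorem inv_mul_posLog_mul_pow_le {x r t M : ℝ} {n : ℕ} (hx : 0 ≤ x) (hr : 0 < r)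
    (hM : x * r ^ n ≤ M) : (n : ℝ)⁻¹ * log⁺ (x * t ^ n) ≤ log⁺ M + log⁺ (t / r) := by
  have hM₀ : 0 ≤ log⁺ M := Real.posLog_nonneg
  have htr₀ : 0 ≤ log⁺ (t / r) := Real.posLog_nonneg
  rcases n.eq_zero_or_pos with rfl | hn
  · simpa using add_nonneg hM₀ htr₀
  have hn₁ : (1 : ℝ) ≤ n := Nat.one_le_cast.2 hn
  have posLog_le : log⁺ (x * t ^ n) ≤ log⁺ M + n * log⁺ (t / r) := calc
    log⁺ (x * t ^ n) = log⁺ (x * r ^ n * (t / r) ^ n) := by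
      rw [mul_assoc, ← mul_pow, mul_div_cancel₀ t hr.ne']
    _ ≤ log⁺ (x * r ^ n) + n * log⁺ (t / r) := Real.posLog_pow n (t / r) ▸ Real.posLog_mul
    _ ≤ log⁺ M + n * log⁺ (t / r) := by grw [Real.posLog_le_posLog (by positivity) hM]
  rw [inv_mul_le_iff₀ (by positivity)]
  nlinarith

theorem mul_pow_le_one_of_inv_mul_posLog_le {x s t : ℝ} {n : ℕ} (hn : n ≠ 0) (hs : 0 < s)
    (ht : 0 < t) (h : (n : ℝ)⁻¹ * log⁺ (x * t ^ n) ≤ Real.log (t / s)) : x * s ^ n ≤ 1 := by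
  have log_le : Real.log (x * t ^ n) ≤ Real.log ((t / s) ^ n) := by
    rw [Real.log_pow, ← inv_mul_le_iff₀ (by positivity)]
    exact (mul_le_mul_of_nonneg_left (le_max_right _ _) (by positivity)).trans h
  rcases le_or_gt x 0 with hx | hx
  · exact (mul_nonpos_of_nonpos_of_nonneg hx (by positivity)).trans zero_le_one
  · rw [Real.log_le_log_iff (by positivity) (by positivity), div_pow,
      le_div_iff₀ (by positivity), mul_right_comm] at log_le
    exact le_of_mul_le_mul_right (log_le.trans_eq (one_mul _).symm) (by positivity)

theorem tendstoUniformlyOn_inv_mul_posLog_norm_mul_pow {c : ℕ → ℂ → E} {D : Set ℂ}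
    {r t δ M : ℝ} (hD : IsOpen D) (hD' : volume D ≠ ∞) (hc : ∀ n, DifferentiableOn ℂ (c n) D)
    (hr : 0 < r) (hM : ∀ n, ∀ z ∈ D, ‖c n z‖ * r ^ n ≤ M) (ht : 0 ≤ t)
    (hC : ∀ z ∈ D, ∃ C, ∀ n, ‖c n z‖ * t ^ n ≤ C) (hδ : 0 < δ) :
    TendstoUniformlyOn (fun (n : ℕ) z => (n : ℝ)⁻¹ * log⁺ (‖c n z‖ * t ^ n)) 0 atTop
      {z | ball z δ ⊆ D} := by
  refine ContinuousSubharmonicOn.tendstoUniformlyOn_zero hD.measurableSet hD' (fun n => ?_)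
    (fun n z _ => mul_nonneg (by positivity) Real.posLog_nonneg)
    (fun n z hz => inv_mul_posLog_mul_pow_le (norm_nonneg _) hr (hM n z hz)) (fun z hz => ?_) hδ
  · have norm_eq (z : ℂ) : ‖c n z‖ * t ^ n = ‖(t ^ n : ℂ) • c n z‖ := by
      simp [norm_smul, abs_of_nonneg ht, mul_comm]
    simp only [norm_eq]
    exact (continuousSubharmonicOn_posLog_norm hD ((hc n).fun_const_smul _)).const_mul
      (by positivity)
  · obtain ⟨C, hC⟩ := hC z hz
    refine squeeze_zero (g := fun n : ℕ => (n : ℝ)⁻¹ * log⁺ C)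
      (fun n => mul_nonneg (by positivity) Real.posLog_nonneg) (fun n => ?_) ?_
    · exact mul_le_mul_of_nonneg_left (Real.posLog_le_posLog (by positivity) (hC n))
        (by positivity)
    · simpa using tendsto_inv_atTop_nhds_zero_nat.mul_const (log⁺ C)

/-- Hartogs' lemma. The functions `n⁻¹ * log⁺ (‖c n z‖ * t ^ n)` tend to `0` pointwise, hence
locally uniformly, so they are eventually below `log (t / s)`. -/
theorem exists_uniform_norm_mul_pow_le {c : ℕ → ℂ → E} {D : Set ℂ} {r s t δ M : ℝ} (hD : IsOpen D)
    (hD' : volume D ≠ ∞) (hc : ∀ n, DifferentiableOn ℂ (c n) D) (hr : 0 < r)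
    (hM : ∀ n, ∀ z ∈ D, ‖c n z‖ * r ^ n ≤ M)
    (hC : ∀ z ∈ D, ∃ C, ∀ n, ‖c n z‖ * t ^ n ≤ C) (hs : 0 < s) (hst : s < t) (hδ : 0 < δ) :
    ∃ A, ∀ n z, ball z δ ⊆ D → ‖c n z‖ * s ^ n ≤ A := by
  have uniform := Metric.tendstoUniformlyOn_iff.1
    (tendstoUniformlyOn_inv_mul_posLog_norm_mul_pow hD hD' hc hr hM (hs.trans hst).le hC hδ)
    (Real.log (t / s)) (Real.log_pos ((one_lt_div hs).2 hst))
  obtain ⟨N, hN⟩ := eventually_atTop.1 (uniform.and (eventually_ne_atTop 0))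
  obtain ⟨A, hA⟩ := ((Finset.range N).image fun n => M * (s / r) ^ n).exists_le
  refine ⟨max 1 A, fun n z hz => ?_⟩
  rcases le_or_gt N n with hn | hn
  · have posLog_lt := (hN n hn).1 z hz
    rw [Pi.zero_apply, dist_zero_left,
      Real.norm_of_nonneg (mul_nonneg (by positivity) Real.posLog_nonneg)] at posLog_lt
    exact (mul_pow_le_one_of_inv_mul_posLog_le (hN n hn).2 hs (hs.trans hst) posLog_lt.le).trans
      (le_max_left _ _)
  · have norm_le : ‖c n z‖ * s ^ n ≤ M * (s / r) ^ n := calc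
      ‖c n z‖ * s ^ n = ‖c n z‖ * r ^ n * (s / r) ^ n := by
        rw [mul_assoc, ← mul_pow, mul_div_cancel₀ s hr.ne']
      _ ≤ M * (s / r) ^ n := by gcongr; exact hM n z (hz (mem_ball_self hδ))
    exact norm_le.trans <| (hA _ (Finset.mem_image_of_mem _ (Finset.mem_range.2 hn))).trans
      (le_max_right _ _)

end Subharmonic

section TaylorCoefficients

variable {E : Type*} [NormedAddCommGroup E] [NormedSpace ℂ E]

/-- The `n`-th Taylor coefficient of `h` at `b`. -/
noncomputable def taylorCoeff (h : ℂ → E) (b : ℂ) (n : ℕ) : E :=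
  (n.factorial : ℂ)⁻¹ • iteratedDeriv n h b

variable [CompleteSpace E]

theorem norm_taylorCoeff_mul_pow_le {h : ℂ → E} {b : ℂ} {r M : ℝ} (hr : 0 < r)
    (hh : DifferentiableOn ℂ h (closedBall b r)) (hM : ∀ w ∈ closedBall b r, ‖h w‖ ≤ M) (n : ℕ) :
    ‖taylorCoeff h b n‖ * r ^ n ≤ M := by
  have cauchy := Complex.norm_iteratedDeriv_le_of_forall_mem_sphere_norm_le n hr
    (hh.mono closure_ball_subset_closedBall).diffContOnCl fun w hw =>
      hM w (sphere_subset_closedBall hw)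
  have factorial_pos : (0 : ℝ) < n.factorial := Nat.cast_pos.2 n.factorial_pos
  rw [taylorCoeff, norm_smul, norm_inv, Complex.norm_natCast, ← le_div_iff₀ (by positivity),
    inv_mul_le_iff₀ factorial_pos, ← mul_div_assoc]
  exact cauchy

theorem norm_le_of_norm_taylorCoeff_mul_pow_le {h : ℂ → E} {b w : ℂ} {r s A : ℝ}
    (hh : DifferentiableOn ℂ h (ball b r)) (hA : ∀ n, ‖taylorCoeff h b n‖ * r ^ n ≤ A)
    (hsr : s < r) (hw : w ∈ ball b s) : ‖h w‖ ≤ A * (1 - s / r)⁻¹ := by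
  have hs : 0 < s := pos_of_mem_ball hw
  have hr : 0 < r := hs.trans hsr
  refine (Complex.hasSum_taylorSeries_on_ball hh (ball_subset_ball hsr.le hw)).norm_le_of_bounded
    ((hasSum_geometric_of_lt_one (by positivity) ((div_lt_one hr).2 hsr)).mul_left A) fun n => ?_
  calc ‖(n.factorial : ℂ)⁻¹ • (w - b) ^ n • iteratedDeriv n h b‖
      = ‖taylorCoeff h b n‖ * ‖w - b‖ ^ n := by
        rw [smul_comm, ← taylorCoeff, norm_smul, norm_pow, mul_comm]
    _ ≤ ‖taylorCoeff h b n‖ * s ^ n := by gcongr; exact (mem_ball_iff_norm.1 hw).le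
    _ = ‖taylorCoeff h b n‖ * r ^ n * (s / r) ^ n := by
        rw [mul_assoc, ← mul_pow, mul_div_cancel₀ s hr.ne']
    _ ≤ A * (s / r) ^ n := by gcongr; exact hA n

theorem analyticOnNhd_iteratedDeriv_snd {𝕜 V F : Type*} [NontriviallyNormedField 𝕜]
    [NormedAddCommGroup V] [NormedSpace 𝕜 V] [NormedAddCommGroup F] [NormedSpace 𝕜 F]
    [CompleteSpace F] {f : V × 𝕜 → F} {s : Set (V × 𝕜)} (hs : IsOpen s)
    (hf : AnalyticOnNhd 𝕜 f s) (n : ℕ) :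
    AnalyticOnNhd 𝕜 (fun p : V × 𝕜 => iteratedDeriv n (fun w => f (p.1, w)) p.2) s := by
  induction n with
  | zero => simpa only [iteratedDeriv_zero] using hf
  | succ n ih =>
    refine (((ContinuousLinearMap.apply 𝕜 F ((0 : V), (1 : 𝕜))).analyticOnNhd univ).comp ih.fderiv
      fun _ _ => mem_univ _).congr hs fun p hp => ?_
    have hasDerivAt_mk : HasDerivAt (fun w : 𝕜 => (p.1, w)) ((0 : V), (1 : 𝕜)) p.2 :=
      (hasDerivAt_const p.2 p.1).prodMk (hasDerivAt_id p.2)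
    have chain := (ih p hp).differentiableAt.hasFDerivAt.comp_hasDerivAt p.2 hasDerivAt_mk
    simp only [iteratedDeriv_succ]
    exact chain.deriv.symm

theorem differentiableOn_taylorCoeff_snd {f : ℂ × ℂ → E} {S T : Set ℂ} {b : ℂ} (hS : IsOpen S)
    (hT : IsOpen T) (hf : AnalyticOnNhd ℂ f (S ×ˢ T)) (hb : b ∈ T) (n : ℕ) :
    DifferentiableOn ℂ (fun z => taylorCoeff (fun w => f (z, w)) b n) S :=
  .fun_const_smul
    ((analyticOnNhd_iteratedDeriv_snd (hS.prod hT) hf n).differentiableOn.comp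
      (f := fun z : ℂ => (z, b)) (by fun_prop) fun _ hz => ⟨hz, hb⟩) _

end TaylorCoefficients

section Hartogs

theorem exists_isOpen_forall_norm_le {X Y E : Type*} [TopologicalSpace X] [TopologicalSpace Y]
    [BaireSpace Y] [Nonempty Y] [SeminormedAddGroup E] {f : X → Y → E} {K : Set X}
    (hK : IsCompact K) (hfX : ∀ y, ContinuousOn (f · y) K) (hfY : ∀ x ∈ K, Continuous (f x)) :
    ∃ V : Set Y, IsOpen V ∧ V.Nonempty ∧ ∃ M : ℝ, ∀ x ∈ K, ∀ y ∈ V, ‖f x y‖ ≤ M := by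
  let B : ℕ → Set Y := fun m => {y | ∀ x ∈ K, ‖f x y‖ ≤ m}
  have isClosed_B (m : ℕ) : IsClosed (B m) := by
    simp only [B, ofPred_forall]
    exact isClosed_biInter fun x hx => isClosed_le (hfY x hx).norm continuous_const
  have iUnion_B : ⋃ m, B m = univ := by
    refine eq_univ_of_forall fun y => mem_iUnion.2 ?_
    obtain ⟨C, hC⟩ := hK.exists_bound_of_continuousOn (hfX y)
    obtain ⟨m, hm⟩ := exists_nat_ge C
    exact ⟨m, fun x hx => (hC x hx).trans hm⟩
  obtain ⟨m, hm⟩ := nonempty_interior_of_iUnion_of_closed isClosed_B iUnion_B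
  exact ⟨interior (B m), isOpen_interior, hm, m, fun x hx y hy => interior_subset hy x hx⟩

variable {E : Type*} [NormedAddCommGroup E] [NormedSpace ℂ E]

namespace SeparatelyHolomorphicOn

variable {f : ℂ × ℂ → E} {S T : Set ℂ}

theorem exists_norm_le_on_ball {K : Set ℂ} {b : ℂ} {R : ℝ}
    (hf : SeparatelyHolomorphicOn f K (ball b R)) (hK : IsCompact K) (hR : 0 < R) :
    ∃ b' ∈ ball b R, ∃ r > 0, ∃ M, ∀ z ∈ K, ∀ w ∈ ball b' r, ‖f (z, w)‖ ≤ M := by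
  have : Nonempty (ball b R) := ⟨⟨b, mem_ball_self hR⟩⟩
  have : BaireSpace (ball b R) := isOpen_ball.baireSpace
  obtain ⟨V, hV, ⟨b', hb'⟩, M, hM⟩ := exists_isOpen_forall_norm_le
    (f := fun z (w : ball b R) => f (z, w)) hK (fun w => (hf.fst w w.2).continuousOn)
    fun z hz => (hf.snd z hz).continuousOn.domRestrict
  obtain ⟨r, hr, hrV⟩ := isOpen_iff.1 (isOpen_ball.isOpenMap_subtype_val V hV) b' ⟨b', hb', rfl⟩
  refine ⟨b', b'.2, r, hr, M, fun z hz w hw => ?_⟩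
  obtain ⟨y, hy, rfl⟩ := hrV hw
  exact hM z hz y hy

variable [CompleteSpace E]

theorem exists_norm_le_of_norm_le_on_ball {D : Set ℂ} {b : ℂ} {r s ρ δ M : ℝ}
    (hf : SeparatelyHolomorphicOn f D (ball b ρ)) (hD : IsOpen D) (hD' : volume D ≠ ∞)
    (hr : 0 < r) (hM : ∀ z ∈ D, ∀ w ∈ ball b r, ‖f (z, w)‖ ≤ M) (hs : 0 < s) (hsρ : s < ρ)
    (hδ : 0 < δ) :
    ∃ A, ∀ z, ball z δ ⊆ D → ∀ w ∈ ball b s, ‖f (z, w)‖ ≤ A := by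
  wlog hrρ : r ≤ ρ generalizing r
  · exact this (hs.trans hsρ)
      (fun z hz w hw => hM z hz w (ball_subset_ball (le_of_not_ge hrρ) hw)) le_rfl
  obtain ⟨t, hst, htρ⟩ := exists_between hsρ
  obtain ⟨t', htt', ht'ρ⟩ := exists_between htρ
  have ht : 0 < t := hs.trans hst
  have f_analytic : AnalyticOnNhd ℂ f (D ×ˢ ball b r) :=
    (hf.mono subset_rfl (ball_subset_ball hrρ)).analyticOnNhd_of_norm_le hD isOpen_ball hM
  have closedBall_subset : closedBall b (r / 2) ⊆ ball b r :=
    closedBall_subset_ball (half_lt_self hr)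
  have coeff_bound (n : ℕ) (z : ℂ) (hz : z ∈ D) :
      ‖taylorCoeff (fun w => f (z, w)) b n‖ * (r / 2) ^ n ≤ M :=
    norm_taylorCoeff_mul_pow_le (half_pos hr)
      ((hf.snd z hz).mono (closedBall_subset.trans (ball_subset_ball hrρ)))
      (fun w hw => hM z hz w (closedBall_subset hw)) n
  have coeff_pointwise_bound (z : ℂ) (hz : z ∈ D) :
      ∃ C, ∀ n, ‖taylorCoeff (fun w => f (z, w)) b n‖ * t' ^ n ≤ C := by
    have differentiable := (hf.snd z hz).mono (closedBall_subset_ball ht'ρ)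
    obtain ⟨C, hC⟩ := (isCompact_closedBall b t').exists_bound_of_continuousOn
      differentiable.continuousOn
    exact ⟨C, norm_taylorCoeff_mul_pow_le (ht.trans htt') differentiable hC⟩
  obtain ⟨A, hA⟩ := exists_uniform_norm_mul_pow_le hD hD'
    (differentiableOn_taylorCoeff_snd hD isOpen_ball f_analytic (mem_ball_self hr)) (half_pos hr)
    coeff_bound coeff_pointwise_bound ht htt' hδ
  exact ⟨A * (1 - s / t)⁻¹, fun z hz w hw => norm_le_of_norm_taylorCoeff_mul_pow_le
    ((hf.snd z (hz (mem_ball_self hδ))).mono (ball_subset_ball htρ.le)) (hA · z hz) hst hw⟩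

theorem analyticOnNhd (hf : SeparatelyHolomorphicOn f S T) (hS : IsOpen S) (hT : IsOpen T) :
    AnalyticOnNhd ℂ f (S ×ˢ T) := by
  rintro ⟨a, b⟩ ⟨ha, hb⟩
  obtain ⟨R, hR, hRS, hRT⟩ : ∃ R > 0, closedBall a (2 * R) ⊆ S ∧ ball b (3 * R) ⊆ T := by
    obtain ⟨r, hr, hrS⟩ := nhds_basis_closedBall.mem_iff.1 (hS.mem_nhds ha)
    obtain ⟨s, hs, hsT⟩ := isOpen_iff.1 hT b hb
    exact ⟨min (r / 2) (s / 3), by positivity,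
      (closedBall_subset_closedBall (by linarith [min_le_left (r / 2) (s / 3)])).trans hrS,
      (ball_subset_ball (by linarith [min_le_right (r / 2) (s / 3)])).trans hsT⟩
  obtain ⟨b', hb', r, hr, M, hM⟩ :=
    (hf.mono hRS ((ball_subset_ball (by linarith)).trans hRT)).exists_norm_le_on_ball
      (isCompact_closedBall a (2 * R)) hR
  have ball_a_subset : ball a (2 * R) ⊆ S := ball_subset_closedBall.trans hRS
  have ball_b'_subset : ball b' (2 * R) ⊆ T :=
    (ball_subset_ball' (by linarith [mem_ball.1 hb'])).trans hRT
  obtain ⟨A, hA⟩ := (hf.mono ball_a_subset ball_b'_subset).exists_norm_le_of_norm_le_on_ball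
    isOpen_ball measure_ball_lt_top.ne hr (fun z hz => hM z (ball_subset_closedBall hz)) hR
    (by linarith : R < 2 * R) hR
  have ball_half {c : ℂ} : ball c R ⊆ ball c (2 * R) := ball_subset_ball (by linarith)
  exact (hf.mono (ball_half.trans ball_a_subset)
    (ball_half.trans ball_b'_subset)).analyticOnNhd_of_norm_le isOpen_ball isOpen_ball
    (fun z hz => hA z (ball_subset_ball' (by linarith [mem_ball.1 hz]))) (a, b)
    ⟨mem_ball_self hR, mem_ball_comm.1 hb'⟩

end SeparatelyHolomorphicOn

end Hartogs

theorem stmt_11_general {E : Type*} [NormedAddCommGroup E] [NormedSpace ℂ E] [CompleteSpace E]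
    {U V : Set ℂ} (hU : IsOpen U) (hRV : ∀ x : ℝ, (x : ℂ) ∈ V)
    (hVU : ∀ z ∈ V, Complex.exp (Complex.I * z) ∈ U) {F : ℂ × ℂ → E}
    (hF₁ : ∀ z₂ ∈ U, DifferentiableOn ℂ (fun z₁ => F (z₁, z₂)) U)
    (hF₂ : ∀ z₁ ∈ U, DifferentiableOn ℂ (fun z₂ => F (z₁, z₂)) U) :
    AnalyticOnNhd ℂ
      (fun p : ℂ × ℂ => F (Complex.exp (Complex.I * p.1), Complex.exp (Complex.I * p.2)))
      (V ×ˢ V) ∧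
    AnalyticOnNhd ℝ
      (fun p : ℝ × ℝ =>
        F (Complex.exp (Complex.I * p.1), Complex.exp (Complex.I * p.2)))
      Set.univ := by
  have F_analytic := (SeparatelyHolomorphicOn.mk hF₁ hF₂).analyticOnNhd hU hU
  have exp_analytic : AnalyticOnNhd ℂ
      (fun p : ℂ × ℂ => (Complex.exp (Complex.I * p.1), Complex.exp (Complex.I * p.2))) univ :=
    fun p _ => (analyticAt_const.mul analyticAt_fst).cexp.prod
      (analyticAt_const.mul analyticAt_snd).cexp
  have comp_analytic := F_analytic.comp (exp_analytic.mono (subset_univ (V ×ˢ V)))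
    fun p hp => ⟨hVU _ hp.1, hVU _ hp.2⟩
  refine ⟨comp_analytic, ?_⟩
  exact comp_analytic.restrictScalars.comp
    (fun p _ => ((Complex.ofRealCLM.analyticAt _).comp analyticAt_fst).prod
      ((Complex.ofRealCLM.analyticAt _).comp analyticAt_snd))
    fun p _ => ⟨hRV p.1, hRV p.2⟩

/-- If `F` is separately holomorphic on `U × U` and `V ⊆ ℂ` is open containing the
reals with `exp(iV) ⊆ U`, then `(θ₁,θ₂) ↦ F(e^{iθ₁}, e^{iθ₂})` is holomorphic on
`V × V` and its restriction to `ℝ²` is real-analytic. -/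
theorem stmt_11 (U V : Set ℂ) (hU : IsOpen U) (hV : IsOpen V)
    (hRV : ∀ x : ℝ, (x : ℂ) ∈ V) (hVU : ∀ z ∈ V, Complex.exp (Complex.I * z) ∈ U)
    (F : ℂ × ℂ → ℂ)
    (hF₁ : ∀ z₂ ∈ U, DifferentiableOn ℂ (fun z₁ => F (z₁, z₂)) U)
    (hF₂ : ∀ z₁ ∈ U, DifferentiableOn ℂ (fun z₂ => F (z₁, z₂)) U) :
    DifferentiableOn ℂ
      (fun p : ℂ × ℂ => F (Complex.exp (Complex.I * p.1), Complex.exp (Complex.I * p.2)))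
      (V ×ˢ V) ∧
    AnalyticOn ℝ
      (fun p : ℝ × ℝ =>
        F (Complex.exp (Complex.I * p.1), Complex.exp (Complex.I * p.2)))
      Set.univ := by
  have h := stmt_11_general hU hRV hVU hF₁ hF₂
  exact ⟨h.1.differentiableOn, h.2.analyticOn⟩
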